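/- arXiv:1505.08132 — 2 statements merged into one kernel-verified Lean document; each statement's English description precedes it below -/
import Mathlib

section
/- Let n > 1, d ≥ 2, k ≥ 1. The sum of the k-th powers of all d×d matrices over Z/nZ equals (n/2)·I_2 if d = 2, n ≡ 2 (mod 4), and k > 1 with k ≡ 0, 1, 5 (mod 6); otherwise it equals the zero matrix. -/
open Finset in
/-- Sums vanish when each orbit sum of a free action vanishes. -/
theorem sum_zero_of_free {X G V : Type*} [DecidableEq X] [AddGroup G] [Fintype G]
    [AddCommMonoid V] (act : G → X → X) (h0 : ∀ x, act 0 x = x)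
    (hadd : ∀ a b x, act (a + b) x = act a (act b x)) (s : Finset X)
    (hs : ∀ g, ∀ x ∈ s, act g x ∈ s) (hfree : ∀ g, ∀ x ∈ s, act g x = x → g = 0)
    (f : X → V) (hf : ∀ x ∈ s, ∑ g, f (act g x) = 0) : ∑ x ∈ s, f x = 0 := by
  classical
  let R : Setoid X :=
    { r := fun a x => ∃ g, a = act g x
      iseqv := ⟨fun x => ⟨0, (h0 x).symm⟩,
        fun {x y} ⟨g, hg⟩ => ⟨-g, by rw [hg, ← hadd, neg_add_cancel, h0]⟩,
        fun {x y z} ⟨g, hg⟩ ⟨g', hg'⟩ => ⟨g + g', by rw [hg, hg', hadd]⟩⟩ }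
  refine Finset.sum_cancels_of_partition_cancels R ?_
  intro x hx
  have : s.filter (fun a => R a x) = univ.image (fun g => act g x) := by
    ext a
    simp only [mem_filter, mem_image, mem_univ, true_and]
    constructor
    · rintro ⟨_, g, rfl⟩; exact ⟨g, rfl⟩
    · rintro ⟨g, rfl⟩; exact ⟨hs g x hx, g, rfl⟩
  rw [this, sum_image, hf x hx]
  intro a _ b _ hab
  have h1 : act (-b + a) x = x := by
    rw [hadd]; change act a x = act b x at hab
    rw [hab, ← hadd, neg_add_cancel, h0]
  have := hfree _ x hx h1
  exact (neg_add_eq_zero.mp this).symm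

open Matrix in
theorem field_case (p d k : ℕ) [Fact p.Prime] (hd : 2 ≤ d) (h : d ≠ 2 ∨ p ≠ 2) :
    ∑ M : Matrix (Fin d) (Fin d) (ZMod p), M ^ k = 0 := by
  classical
  have key : ∀ i : Fin d, ∑ M : Matrix (Fin d) (Fin d) (ZMod p), (M ^ k) *ᵥ Pi.single i 1 = 0 := by
    intro i
    obtain ⟨j, hj⟩ : ∃ j : Fin d, j ≠ i := by
      have : Nontrivial (Fin d) := Fin.nontrivial_iff_two_le.mpr hd
      exact exists_ne i
    rw [← Finset.sum_filter_add_sum_filter_not Finset.univ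
      (fun M : Matrix (Fin d) (Fin d) (ZMod p) => ∃ c : ZMod p, M *ᵥ Pi.single i 1 = c • Pi.single i 1)]
    have hz : Matrix.single i j (1 : ZMod p) *ᵥ Pi.single i 1 = 0 := by
      ext x
      rw [Matrix.mulVec_single_one]
      simp [Matrix.single, hj]
    have e1 : ∀ (M : Matrix (Fin d) (Fin d) (ZMod p)) (c : ZMod p),
        M *ᵥ Pi.single i 1 = c • Pi.single i 1 →
        (M ^ k) *ᵥ Pi.single i 1 = c ^ k • Pi.single i 1 := by
      intro M c hM
      induction k with
      | zero => rw [pow_zero, pow_zero, one_mulVec, one_smul]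
      | succ k ih =>
        rw [pow_succ, ← Matrix.mulVec_mulVec, hM, Matrix.mulVec_smul, ih, smul_smul, pow_succ, mul_comm]
    rw [sum_zero_of_free (G := ZMod p) (fun t M => M + t • Matrix.single i j 1), zero_add]
    · let N : AddSubgroup (Fin d → ZMod p) := (Pi.evalAddMonoidHom (fun _ => ZMod p) i).ker
      have hN : ∀ φ : N, φ.1 i = 0 := fun φ => φ.2
      have hE : ∀ φ ψ : N, vecMulVec (Pi.single i (1 : ZMod p)) φ.1 *
          vecMulVec (Pi.single i (1 : ZMod p)) ψ.1 = 0 := by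
        intro φ ψ
        rw [vecMulVec_mul_vecMulVec]
        simp [hN]
      have hEe : ∀ φ : N, vecMulVec (Pi.single i (1 : ZMod p)) φ.1 *ᵥ Pi.single i 1 = 0 := by
        intro φ
        rw [vecMulVec_mulVec]; simp [hN]
      let g : N → Matrix (Fin d) (Fin d) (ZMod p) := fun φ => 1 + vecMulVec (Pi.single i 1) φ.1
      have g0 : g 0 = 1 := by
        simp [g]
      have gadd : ∀ φ ψ, g (φ + ψ) = g φ * g ψ := by
        intro φ ψ
        simp only [g, mul_add, add_mul, hE, mul_one, one_mul, AddSubgroup.coe_add, vecMulVec_add]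
        abel
      have gneg : ∀ φ, g (-φ) * g φ = 1 := by
        intro φ; rw [← gadd, neg_add_cancel, g0]
      have ge : ∀ φ, g φ *ᵥ Pi.single i 1 = Pi.single i 1 := by
        intro φ; simp only [g, add_mulVec, hEe, one_mulVec, add_zero]
      have gv : ∀ φ w, g φ *ᵥ w = w + (φ.1 ⬝ᵥ w) • Pi.single i 1 := by
        intro φ w
        simp only [g, add_mulVec, one_mulVec, vecMulVec_mulVec]
        simp
      have gpow : ∀ φ M, (g φ * M * g (-φ)) ^ k = g φ * M ^ k * g (-φ) := by
        intro φ M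
        clear e1
        induction k with
        | zero => simp [← gadd, g0]
        | succ k ih =>
          rw [pow_succ, ih, pow_succ]
          calc _ = g φ * M ^ k * (g (-φ) * g φ) * M * g (-φ) := by simp only [mul_assoc]
            _ = _ := by rw [gneg]; simp only [mul_assoc, one_mul]
      have hsumN : ∑ φ : N, φ.1 = 0 := by
        by_cases hp : p = 2
        · subst hp
          have hd3 : d ≠ 2 := by tauto
          ext m
          rw [Finset.sum_apply]
          obtain ⟨l, hl⟩ : ∃ l : Fin d, l ∉ ({i, m} : Finset (Fin d)) := by
            by_contra! hh
            have : (Finset.univ : Finset (Fin d)).card ≤ ({i, m} : Finset (Fin d)).card :=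
              Finset.card_le_card (fun x _ => hh x)
            have h2 := Finset.card_le_two (a := i) (b := m)
            simp at this; omega
          simp only [Finset.mem_insert, Finset.mem_singleton, not_or] at hl
          let e : N := ⟨Pi.single l 1, by
            change (Pi.single l 1 : Fin d → ZMod 2) i = 0
            simp [Ne.symm hl.1]⟩
          have he2 : e + e = 0 := by
            ext x; simp [CharTwo.add_self_eq_zero]
          have hem : e.1 m = 0 := by simp [e, Ne.symm hl.2]
          have hene : e ≠ 0 := by
            intro h; have := congrFun (congrArg Subtype.val h) l; simp [e] at this
          refine Finset.sum_involution (fun φ _ => φ + e) ?_ ?_ ?_ ?_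
          · intro φ _; simp [hem, CharTwo.add_self_eq_zero]
          · intro φ _ _ h; exact hene (by simpa using h)
          · intro φ _; exact Finset.mem_univ _
          · intro φ _; simp only [add_assoc, he2, add_zero]
        · have h1 : ∑ φ : N, φ.1 = ∑ φ : N, -φ.1 :=
            Fintype.sum_equiv (Equiv.neg N) _ _ (by intro x; simp)
          rw [Finset.sum_neg_distrib] at h1
          ext m
          have h2 := congrFun h1 m
          rw [Pi.neg_apply] at h2
          have : Fact (2 < p) := ⟨lt_of_le_of_ne (Fact.out : p.Prime).two_le (Ne.symm hp)⟩
          have := (ZMod.neg_eq_self_iff _).mp h2.symm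
          rcases this with h | h
          · exact h
          · exfalso
            have := (Fact.out : p.Prime).eq_one_or_self_of_dvd 2 ⟨_, h.symm⟩
            omega
      have hcard : ((Fintype.card N : ℕ) : ZMod p) = 0 := by
        rw [ZMod.natCast_eq_zero_iff]
        let e : N := ⟨Pi.single j 1, by
            change (Pi.single j 1 : Fin d → ZMod p) i = 0
            simp [Ne.symm hj]⟩
        have : addOrderOf e = p := by
          refine addOrderOf_eq_prime ?_ ?_
          · ext x; simp
          · intro h; have := congrFun (congrArg Subtype.val h) j; simp [e] at this
        have h2 : addOrderOf e ∣ Fintype.card N := addOrderOf_dvd_card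
        rwa [this] at h2
      refine sum_zero_of_free (G := N) (fun φ M => g φ * M * g (-φ)) ?_ ?_ _ ?_ ?_ _ ?_
      · intro M; simp [g0]
      · intro a b M; simp only [neg_add_rev, gadd, mul_assoc]
      · intro φ M hM
        simp only [Finset.mem_filter, Finset.mem_univ, true_and] at hM ⊢
        rintro ⟨c, hc⟩
        apply hM
        refine ⟨c, ?_⟩
        rw [← mulVec_mulVec, ge, ← mulVec_mulVec] at hc
        have := congrArg (g (-φ) *ᵥ ·) hc
        simp only [mulVec_mulVec, ← mul_assoc, gneg, one_mul, mulVec_smul, ge] at this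
        exact this
      · intro φ M hM hfix
        simp only [Finset.mem_filter, Finset.mem_univ, true_and] at hM
        have h1 := congrArg (· *ᵥ (Pi.single i 1 : Fin d → ZMod p)) hfix
        simp only [← mulVec_mulVec, ge] at h1
        have hcomm : g φ * M = M * g φ := by
          have := congrArg (· * g φ) hfix
          simpa only [mul_assoc, gneg, mul_one] using this
        by_contra hne
        obtain ⟨m, hm⟩ : ∃ m, φ.1 m ≠ 0 := by
          by_contra! hh
          exact hne (Subtype.ext (funext hh))
        apply hM
        have h2 := congrArg (· *ᵥ (Pi.single m 1 : Fin d → ZMod p)) hcomm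
        simp only [← mulVec_mulVec, gv, mulVec_add, mulVec_smul] at h2
        have h3 := add_left_cancel h2
        refine ⟨(φ.1 m)⁻¹ * (φ.1 ⬝ᵥ M *ᵥ Pi.single m 1), ?_⟩
        rw [mul_smul, h3, smul_smul]
        simp [hm]
      · intro M hM
        simp only [gpow, ← mulVec_mulVec, ge]
        simp only [gv, Finset.sum_add_distrib, ← Finset.sum_smul, ← sum_dotProduct, hsumN]
        simp [Finset.sum_const, hcard, ← Nat.cast_smul_eq_nsmul (ZMod p)]
    · intro M; simp
    · intro a b M; rw [add_smul]; abel
    · intro t M hM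
      simp only [Finset.mem_filter, Finset.mem_univ, true_and] at hM ⊢
      obtain ⟨c, hc⟩ := hM
      refine ⟨c, ?_⟩
      rw [add_mulVec, hc, smul_mulVec, hz]
      simp
    · intro t M _ hfix
      have := congrFun (congrFun (add_eq_left.mp hfix) i) j
      simpa using this
    · intro M hM
      simp only [Finset.mem_filter, Finset.mem_univ, true_and] at hM
      obtain ⟨c, hc⟩ := hM
      rw [Finset.sum_congr rfl (g := fun _ => c ^ k • (Pi.single i 1 : Fin d → ZMod p))]
      · simp [← Nat.cast_smul_eq_nsmul (ZMod p)]
      · intro t _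
        apply e1
        rw [add_mulVec, hc, smul_mulVec, hz]
        simp
  ext a b
  have := congrFun (key b) a
  rw [← sum_mulVec] at this
  simpa using this

theorem two_case (k : ℕ) (hk : 1 ≤ k) :
    ∑ M : Matrix (Fin 2) (Fin 2) (ZMod 2), M ^ k =
    if 1 < k ∧ (k % 6 = 0 ∨ k % 6 = 1 ∨ k % 6 = 5) then 1 else 0 := by
  have h8 : ∀ M : Matrix (Fin 2) (Fin 2) (ZMod 2), M ^ 8 = M ^ 2 := by decide +kernel
  have hper : ∀ (q r : ℕ) (M : Matrix (Fin 2) (Fin 2) (ZMod 2)), M ^ (r + 2 + 6 * q) = M ^ (r + 2) := by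
    intro q r M
    induction q with
    | zero => simp
    | succ q ih =>
      rw [← ih, show r + 2 + 6 * (q + 1) = 8 + (r + 6 * q) by ring, pow_add, h8, ← pow_add]
      congr 1; ring
  rcases Nat.lt_or_ge 1 k with h | h
  · obtain ⟨q, r, hr, rfl⟩ : ∃ q r, r < 6 ∧ k = r + 2 + 6 * q :=
      ⟨(k - 2) / 6, (k - 2) % 6, Nat.mod_lt _ (by norm_num), by omega⟩
    simp only [hper, h, true_and, Nat.add_mul_mod_self_left]
    clear h hk
    interval_cases r <;> decide +kernel
  · have : k = 1 := by omega
    subst this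
    decide +kernel

/-- Integer matrix: sum of the `k`-th powers of all matrices with entries in `[0, n)`. -/
def TT (d k n : ℕ) : Matrix (Fin d) (Fin d) ℤ :=
  ∑ M : Matrix (Fin d) (Fin d) (Fin n), (M.map (fun x => ((x : ℕ) : ℤ))) ^ k

/-- Reduction modulo `a`. -/
def red (d a : ℕ) : Matrix (Fin d) (Fin d) ℤ →+* Matrix (Fin d) (Fin d) (ZMod a) :=
  (Int.castRingHom (ZMod a)).mapMatrix

theorem red_apply (d a : ℕ) (X : Matrix (Fin d) (Fin d) ℤ) (i j : Fin d) :
    red d a X i j = ((X i j : ℤ) : ZMod a) := rfl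

theorem red_eq_zero (d a : ℕ) (X : Matrix (Fin d) (Fin d) ℤ) :
    red d a X = 0 ↔ ∀ i j, (a : ℤ) ∣ X i j := by
  simp only [← Matrix.ext_iff, red_apply, Matrix.zero_apply, ZMod.intCast_zmod_eq_zero_iff_dvd]

theorem red_TT (d k n : ℕ) [NeZero n] :
    red d n (TT d k n) = ∑ M : Matrix (Fin d) (Fin d) (ZMod n), M ^ k := by
  rw [TT, map_sum]
  refine Fintype.sum_equiv
    (Equiv.arrowCongr (Equiv.refl _) (Equiv.arrowCongr (Equiv.refl _) (ZMod.finEquiv n).toEquiv)) _ _ ?_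
  intro M
  rw [map_pow]
  congr 1
  ext i j
  rw [red_apply]
  cases n with
  | zero => exact absurd rfl (NeZero.ne 0)
  | succ n => 
    have : ∀ x : Fin (n + 1), (((x : ℕ) : ℤ) : ZMod (n + 1)) = x := by
      intro x
      rw [Int.cast_natCast]
      exact Fin.cast_val_eq_self x
    exact this _

/-- Splitting of digits. -/
def splitEquiv (d m a : ℕ) :
    Matrix (Fin d) (Fin d) (Fin m) × Matrix (Fin d) (Fin d) (Fin a) ≃
      Matrix (Fin d) (Fin d) (Fin (m * a)) where
  toFun P := Matrix.of fun i j => finProdFinEquiv (P.1 i j, P.2 i j)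
  invFun M := (Matrix.of fun i j => (finProdFinEquiv.symm (M i j)).1,
    Matrix.of fun i j => (finProdFinEquiv.symm (M i j)).2)
  left_inv P := by
    ext i j <;> simp
  right_inv M := by
    ext i j; simp [Nat.mod_add_div]

/-- Integer lift. -/
def lft {d n : ℕ} (M : Matrix (Fin d) (Fin d) (Fin n)) : Matrix (Fin d) (Fin d) ℤ :=
  M.map (fun x => ((x : ℕ) : ℤ))

theorem TT_split (d k m a : ℕ) :
    TT d k (m * a) = ∑ A : Matrix (Fin d) (Fin d) (Fin a), ∑ B : Matrix (Fin d) (Fin d) (Fin m),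
      (lft A + (a : ℤ) • lft B) ^ k := by
  rw [TT, ← Equiv.sum_comp (splitEquiv d m a), Fintype.sum_prod_type_right]
  refine Finset.sum_congr rfl fun A _ => Finset.sum_congr rfl fun B _ => ?_
  have : (splitEquiv d m a (B, A)).map (fun x => ((x : ℕ) : ℤ)) = lft A + (a : ℤ) • lft B := by
    ext i j
    rw [Matrix.add_apply, Matrix.smul_apply]
    simp [splitEquiv, lft]
  rw [this]

theorem card_mat (d m : ℕ) : Fintype.card (Matrix (Fin d) (Fin d) (Fin m)) = m ^ (d * d) := by
  have : Fintype.card (Fin d → Fin d → Fin m) = m ^ (d * d) := by simp [pow_mul]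
  rw [← this]
  exact Fintype.card_congr (Equiv.refl _)

theorem red_smul (d a : ℕ) (X : Matrix (Fin d) (Fin d) ℤ) : red d a ((a : ℤ) • X) = 0 := by
  rw [red_eq_zero]; intro i j; simp

theorem red_TT_mul (d k m a : ℕ) :
    red d a (TT d k (m * a)) = (m ^ (d * d)) • red d a (TT d k a) := by
  rw [TT_split, TT, map_sum, map_sum, Finset.smul_sum]
  refine Finset.sum_congr rfl fun A _ => ?_
  rw [map_sum, Finset.sum_congr rfl (g := fun _ => red d a (lft A ^ k))]
  · rw [Finset.sum_const, Finset.card_univ, card_mat]; rfl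
  · intro B _
    rw [map_pow, map_add, red_smul, add_zero, map_pow]

theorem pow_expand {d : ℕ} (a : ℤ) (A : Matrix (Fin d) (Fin d) ℤ) (k : ℕ) :
    ∃ L : Matrix (Fin d) (Fin d) ℤ →+ Matrix (Fin d) (Fin d) ℤ, ∀ B, ∃ C,
      (A + a • B) ^ k = A ^ k + a • L B + (a * a) • C := by
  induction k with
  | zero => exact ⟨0, fun B => ⟨0, by simp⟩⟩
  | succ k ih =>
    obtain ⟨L, hL⟩ := ih
    refine ⟨(AddMonoidHom.mulRight A).comp L + AddMonoidHom.mulLeft (A ^ k), fun B => ?_⟩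
    obtain ⟨C, hC⟩ := hL B
    refine ⟨L B * B + C * A + a • (C * B), ?_⟩
    rw [pow_succ, hC, pow_succ]
    simp only [AddMonoidHom.add_apply, AddMonoidHom.comp_apply, AddMonoidHom.coe_mulRight,
      AddMonoidHom.coe_mulLeft, mul_add, add_mul, smul_add, smul_mul_assoc, mul_smul_comm, smul_smul,
      mul_assoc]
    abel

theorem sum_lft (d p : ℕ) (hd : 2 ≤ d) : ∃ Y, ∑ B : Matrix (Fin d) (Fin d) (Fin p), lft B = (p : ℤ) • Y := by
  rcases Nat.eq_zero_or_pos p with rfl | hp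
  · have : NeZero d := ⟨by omega⟩
    exact ⟨0, by rw [smul_zero]; exact Finset.sum_eq_zero fun B _ => (B 0 0).elim0⟩
  have : NeZero p := ⟨by omega⟩
  have h : ∀ i j, (p : ℤ) ∣ (∑ B : Matrix (Fin d) (Fin d) (Fin p), lft B) i j := by
    intro i j
    rw [Matrix.sum_apply, ← ZMod.intCast_zmod_eq_zero_iff_dvd, Int.cast_sum]
    obtain ⟨l, hl⟩ : ∃ l : Fin d, l ≠ i := by
      have : Nontrivial (Fin d) := Fin.nontrivial_iff_two_le.mpr hd
      exact exists_ne i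
    classical
    refine sum_zero_of_free (G := Fin p) (fun t B => B + Matrix.single l j t) ?_ ?_ _ ?_ ?_ _ ?_
    · intro B; simp
    · intro a b B; rw [Matrix.single_add, add_comm (Matrix.single l j a), add_assoc]
    · intro _ _ _; exact Finset.mem_univ _
    · intro t B _ h
      have := congrFun (congrFun (add_eq_left.mp h) l) j
      simpa using this
    · intro B _
      simp [lft, hl]
  choose Y hY using h
  exact ⟨Matrix.of Y, by ext i j; simpa using hY i j⟩

theorem TT_step (d k p a : ℕ) (hd : 2 ≤ d) (hpa : p ∣ a) :
    red d (p * a) (TT d k (p * a)) = red d (p * a) ((p ^ (d * d)) • TT d k a) := by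
  rw [TT_split, TT, map_sum, Finset.smul_sum, map_sum]
  refine Finset.sum_congr rfl fun A _ => ?_
  obtain ⟨L, hL⟩ := pow_expand (a : ℤ) (lft A) k
  choose C hC using hL
  obtain ⟨Y, hY⟩ := sum_lft d p hd
  obtain ⟨b, rfl⟩ := hpa
  simp only [hC, Finset.sum_add_distrib, ← Finset.smul_sum, ← map_sum, hY]
  rw [Finset.sum_const, Finset.card_univ, card_mat, map_add, map_add, map_zsmul L, smul_smul, mul_comm _ (p : ℤ),
    ← Nat.cast_mul, red_smul]
  have : ∀ Z : Matrix (Fin d) (Fin d) ℤ, (((p * b : ℕ) : ℤ) * ((p * b : ℕ) : ℤ)) • Z = ((p * (p * b) : ℕ) : ℤ) • ((b : ℤ) • Z) := by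
    intro Z; rw [smul_smul]; congr 1; push_cast; ring
  rw [this, red_smul, add_zero, add_zero]; rfl

theorem TT_prime_pow (d k p s : ℕ) (hp : p.Prime) (hd : 2 ≤ d) (h : d ≠ 2 ∨ p ≠ 2 ∨ s ≠ 0) :
    ∀ i j, ((p ^ (s + 1) : ℕ) : ℤ) ∣ TT d k (p ^ (s + 1)) i j := by
  have : Fact p.Prime := ⟨hp⟩
  induction s with
  | zero =>
    rw [zero_add, pow_one, ← red_eq_zero, red_TT]
    exact field_case p d k hd (by tauto)
  | succ s ih =>
    have weak : ∀ i j, ((p ^ s : ℕ) : ℤ) ∣ TT d k (p ^ (s + 1)) i j := by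
      by_cases h0 : s = 0
      · subst h0; simp
      · intro i j
        refine dvd_trans ?_ (ih (by tauto) i j)
        exact_mod_cast pow_dvd_pow p (Nat.le_succ s)
    rw [← red_eq_zero, pow_succ' p (s + 1), TT_step d k p _ hd (dvd_pow_self p (by omega)), red_eq_zero]
    intro i j
    obtain ⟨c, hc⟩ := weak i j
    rw [Matrix.smul_apply, hc, nsmul_eq_mul]
    have : d * d = (d * d - 2) + 2 := by
      have : 2 * 2 ≤ d * d := Nat.mul_le_mul hd hd
      omega
    rw [this]
    exact ⟨p ^ (d * d - 2) * c, by push_cast; ring⟩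

theorem dvd_TT_mul (d k m a : ℕ) (h : ∀ i j, (a : ℤ) ∣ TT d k a i j) :
    ∀ i j, (a : ℤ) ∣ TT d k (m * a) i j := by
  rw [← red_eq_zero] at *
  rw [red_TT_mul, h, smul_zero]

theorem TT_good (d k n : ℕ) (hd : 2 ≤ d) : 0 < n → (d ≠ 2 ∨ n % 4 ≠ 2) →
    ∀ i j, (n : ℤ) ∣ TT d k n i j := by
  induction n using Nat.recOnPosPrimePosCoprime with
  | zero => intro h; omega
  | one => intros; simp
  | prime_pow p s hp hs =>
    intro _ h
    obtain ⟨s, rfl⟩ : ∃ t, s = t + 1 := ⟨s - 1, by omega⟩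
    refine TT_prime_pow d k p s hp hd ?_
    by_contra! hh
    obtain ⟨rfl, rfl, rfl⟩ := hh
    simp at h
  | coprime a b ha hb hab iha ihb =>
    intro _ h i j
    have key : d ≠ 2 ∨ (a % 4 ≠ 2 ∧ b % 4 ≠ 2) := by
      rcases h with h | h
      · exact Or.inl h
      · right
        have hnot : ¬ (2 ∣ a ∧ 2 ∣ b) := fun ⟨h1, h2⟩ => by
          have := Nat.dvd_gcd h1 h2
          rw [hab] at this; omega
        rw [Nat.mul_mod] at h
        have h1 : a % 4 < 4 := Nat.mod_lt _ (by norm_num)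
        have h2 : b % 4 < 4 := Nat.mod_lt _ (by norm_num)
        constructor
        · intro h3
          have h4 : b % 4 = 1 ∨ b % 4 = 3 := by omega
          rcases h4 with h4 | h4 <;> simp [h3, h4] at h
        · intro h3
          have h4 : a % 4 = 1 ∨ a % 4 = 3 := by omega
          rcases h4 with h4 | h4 <;> simp [h3, h4] at h
    have h1 := dvd_TT_mul d k b a (iha (by omega) (by tauto)) i j
    have h2 := dvd_TT_mul d k a b (ihb (by omega) (by tauto)) i j
    rw [mul_comm b a] at h1
    push_cast
    exact IsCoprime.mul_dvd (Nat.isCoprime_iff_coprime.mpr hab) h1 h2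

theorem stmt_7 (n d k : ℕ) (hn : 1 < n) [NeZero n] (hd : 2 ≤ d) (hk : 1 ≤ k) :
    ∑ M : Matrix (Fin d) (Fin d) (ZMod n), M ^ k =
    if d = 2 ∧ n % 4 = 2 ∧ 1 < k ∧ (k % 6 = 0 ∨ k % 6 = 1 ∨ k % 6 = 5)
    then ((n / 2 : ℕ) : ZMod n) • (1 : Matrix (Fin d) (Fin d) (ZMod n))
    else 0 := by
  by_cases h : d ≠ 2 ∨ n % 4 ≠ 2
  · rw [if_neg (by tauto), ← red_TT, red_eq_zero]
    exact TT_good d k n hd (by omega) h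
  · push Not at h
    obtain ⟨rfl, h4⟩ := h
    obtain ⟨m, rfl⟩ : ∃ m, n = m * 2 := ⟨n / 2, by omega⟩
    have hm : m % 2 = 1 := by omega
    obtain ⟨c, hc1, hc2⟩ : ∃ c : ℕ, (∑ M : Matrix (Fin 2) (Fin 2) (ZMod 2), M ^ k = red 2 2 (c : Matrix (Fin 2) (Fin 2) ℤ)) ∧
        (if 2 = 2 ∧ (m * 2) % 4 = 2 ∧ 1 < k ∧ (k % 6 = 0 ∨ k % 6 = 1 ∨ k % 6 = 5)
          then ((m * 2 / 2 : ℕ) : ZMod (m * 2)) • (1 : Matrix (Fin 2) (Fin 2) (ZMod (m * 2)))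
          else 0) = red 2 (m * 2) ((m * c : ℕ) : Matrix (Fin 2) (Fin 2) ℤ) := by
      rw [two_case k hk]
      by_cases hcond : 1 < k ∧ (k % 6 = 0 ∨ k % 6 = 1 ∨ k % 6 = 5)
      · refine ⟨1, by rw [if_pos hcond]; simp, ?_⟩
        rw [if_pos ⟨rfl, h4, hcond⟩, Nat.mul_div_cancel _ (by norm_num), map_natCast, mul_one,
          Nat.cast_smul_eq_nsmul, nsmul_eq_mul, mul_one]
      · refine ⟨0, by rw [if_neg hcond]; simp, ?_⟩
        rw [if_neg (by tauto)]; simp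
    rw [hc2, ← red_TT, ← sub_eq_zero, ← map_sub, red_eq_zero]
    have hA : ∀ i j, (m : ℤ) ∣ (TT 2 k (m * 2) - ((m * c : ℕ) : Matrix (Fin 2) (Fin 2) ℤ)) i j := by
      rw [← red_eq_zero, map_sub, map_natCast, mul_comm m 2, sub_eq_zero]
      rw [(red_eq_zero _ _ _).mpr (dvd_TT_mul 2 k 2 m (TT_good 2 k m le_rfl (by omega) (by omega)))]
      rw [← map_natCast (red 2 m), eq_comm, red_eq_zero]
      intro i j
      rw [Nat.cast_mul, ← nsmul_eq_mul, Matrix.smul_apply, nsmul_eq_mul]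
      exact dvd_mul_right _ _
    have hB : ∀ i j, (2 : ℤ) ∣ (TT 2 k (m * 2) - ((m * c : ℕ) : Matrix (Fin 2) (Fin 2) ℤ)) i j := by
      refine (red_eq_zero 2 2 _).mp ?_
      have hm1 : (m : Matrix (Fin 2) (Fin 2) (ZMod 2)) = 1 := by
        have : (m : ZMod 2) = 1 := by
          have := (ZMod.natCast_eq_natCast_iff' m 1 2).mpr (by omega)
          simpa using this
        rw [← Matrix.diagonal_natCast, this, Matrix.diagonal_one]
      rw [map_sub, red_TT_mul, red_TT, hc1, map_natCast, map_natCast, nsmul_eq_mul]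
      push_cast
      rw [hm1]; simp
    intro i j
    rw [Nat.cast_mul, Nat.cast_two]
    refine IsCoprime.mul_dvd ?_ (hA i j) (hB i j)
    have : Nat.Coprime m 2 := Nat.coprime_two_right.mpr (Nat.odd_iff.mpr hm)
    exact_mod_cast Nat.isCoprime_iff_coprime.mpr this
end

section
/- For n ≥ 1, the sum of the n-th powers of all 2×2 matrices over Z/nZ is nonzero if and only if n ≡ 6 (mod 12). -/
namespace Aux

abbrev Mt (R : Type*) := Matrix (Fin 2) (Fin 2) R

/-- The sum of all elements of a left-multiplication-invariant finite set of matrices vanishes. -/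
lemma sum_inv_zero {R : Type*} [CommRing R] [DecidableEq R] (K : Finset (Mt R))
    (hK : ∀ U Y : Mt R, Y ∈ K → U * Y ∈ K) : ∑ Y ∈ K, Y = 0 := by
  let U : Mt R := !![0, -1; 1, 1]
  let V : Mt R := !![1, 1; -1, 0]
  have h1 : U * V = 1 := by
    ext i j; fin_cases i <;> fin_cases j <;> simp [U, V, Matrix.mul_apply, Fin.sum_univ_two]
  have h2 : V * U = 1 := by
    ext i j; fin_cases i <;> fin_cases j <;> simp [U, V, Matrix.mul_apply, Fin.sum_univ_two]
  have h3 : U + V = 1 := by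
    ext i j; fin_cases i <;> fin_cases j <;> simp [U, V]
  have h : U * ∑ Y ∈ K, Y = ∑ Y ∈ K, Y := by
    rw [Finset.mul_sum]
    refine Finset.sum_bij' (fun Y _ => U * Y) (fun Y _ => V * Y) (fun Y h => hK _ _ h)
      (fun Y h => hK _ _ h) ?_ ?_ (fun _ _ => rfl)
    · intro Y _; simp only [← mul_assoc, h2, one_mul]
    · intro Y _; simp only [← mul_assoc, h1, one_mul]
  have h4 : V * ∑ Y ∈ K, Y = 0 := by
    have : V = 1 - U := by rw [← h3]; abel
    rw [this, sub_mul, one_mul, h, sub_self]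
  calc ∑ Y ∈ K, Y = U * (V * ∑ Y ∈ K, Y) := by rw [← mul_assoc, h1, one_mul]
    _ = 0 := by rw [h4, mul_zero]

lemma pow_mul_ker {A : Type*} [Ring A] (K : Set A) (hl : ∀ U Y, Y ∈ K → U * Y ∈ K)
    (h0 : ∀ Y ∈ K, ∀ Z ∈ K, Y * Z = 0) (M Y Z : A) (hY : Y ∈ K) (hZ : Z ∈ K) (n : ℕ) :
    (M + Y) ^ n * Z = M ^ n * Z := by
  induction n with
  | zero => simp
  | succ n ih =>
    rw [pow_succ', mul_assoc, ih, add_mul, h0 Y hY _ (hl _ _ hZ), add_zero, ← mul_assoc, pow_succ']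

lemma coset_sum {R : Type*} [CommRing R] [DecidableEq R] (K : Finset (Mt R))
    (hl : ∀ U Y : Mt R, Y ∈ K → U * Y ∈ K)
    (h0 : ∀ Y ∈ K, ∀ Z ∈ K, Y * Z = 0) (M : Mt R) (n : ℕ) :
    ∑ Y ∈ K, (M + Y) ^ n = K.card • M ^ n := by
  induction n with
  | zero => simp
  | succ n ih =>
    have : ∀ Y ∈ K, (M + Y) ^ (n+1) = (M + Y) ^ n * M + M ^ n * Y := by
      intro Y hY
      rw [pow_succ, mul_add, pow_mul_ker (K : Set (Mt R)) hl h0 M Y Y hY hY n]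
    rw [Finset.sum_congr rfl this, Finset.sum_add_distrib, ← Finset.sum_mul, ih, ← Finset.mul_sum,
      sum_inv_zero K hl, mul_zero, add_zero, pow_succ, smul_mul_assoc]

lemma fiber_card {A B : Type*} [AddGroup A] [AddGroup B] [Fintype A] [Fintype B] [DecidableEq B]
    (φ : A →+ B) (hφ : Function.Surjective φ) (b : B) :
    (Finset.univ.filter fun a => φ a = b).card = (Finset.univ.filter fun a => φ a = 0).card :=
  AddMonoidHom.card_fiber_eq_of_mem_range φ (hφ _) (hφ _)

lemma ker_card {A B : Type*} [AddGroup A] [AddGroup B] [Fintype A] [Fintype B] [DecidableEq B]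
    (φ : A →+ B) (hφ : Function.Surjective φ) :
    Fintype.card A = Fintype.card B * (Finset.univ.filter fun a => φ a = 0).card := by
  have := Finset.card_eq_sum_card_fiberwise (f := φ) (s := Finset.univ) (t := Finset.univ)
    (fun _ _ => by simp)
  rw [Finset.card_univ] at this
  rw [this, Finset.sum_congr rfl (fun b _ => fiber_card φ hφ b)]
  simp

lemma card_mt (n : ℕ) [NeZero n] : Fintype.card (Mt (ZMod n)) = n ^ 4 := by
  rw [← Nat.card_eq_fintype_card]
  change Nat.card (Fin 2 → Fin 2 → ZMod n) = n ^ 4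
  simp only [Nat.card_fun, Nat.card_zmod, Nat.card_eq_fintype_card (α := Fin 2), Fintype.card_fin]
  ring

/-- reduction map -/
def red (d n : ℕ) (h : d ∣ n) : Mt (ZMod n) →+* Mt (ZMod d) := (ZMod.castHom h (ZMod d)).mapMatrix

lemma red_surj (d n : ℕ) (h : d ∣ n) : Function.Surjective (red d n h) := by
  intro M
  choose f hf using ZMod.castHom_surjective h
  refine ⟨fun i j => f (M i j), ?_⟩
  ext i j
  exact hf (M i j)

lemma red_ker_card (d e n : ℕ) [NeZero n] [NeZero d] (h : n = d * e) :
    (Finset.univ.filter fun a => red d n ⟨e, h⟩ a = 0).card = e ^ 4 := by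
  have := ker_card (red d n ⟨e, h⟩).toAddMonoidHom (red_surj d n ⟨e, h⟩)
  rw [card_mt, card_mt] at this
  have hd : 0 < d ^ 4 := pow_pos (Nat.pos_of_ne_zero (NeZero.ne d)) _
  apply Nat.eq_of_mul_eq_mul_left hd
  rw [← mul_pow, ← h, this]
  rfl

lemma castHom_zero {d n : ℕ} [NeZero n] (h : d ∣ n) (x : ZMod n) :
    ZMod.castHom h (ZMod d) x = 0 ↔ d ∣ x.val := by
  conv_lhs => rw [← ZMod.natCast_zmod_val x, map_natCast]
  exact ZMod.natCast_eq_zero_iff _ _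

lemma big_sum (d e n m : ℕ) [NeZero n] [NeZero d] (h : n = d * e) (hd : n ∣ d * d) :
    ∃ C : Mt (ZMod n), ∑ M : Mt (ZMod n), M ^ m = (e ^ 4) • C := by
  have hdn : d ∣ n := ⟨e, h⟩
  let φ := red d n hdn
  let K := Finset.univ.filter fun a => φ a = 0
  have hl : ∀ U Y : Mt (ZMod n), Y ∈ K → U * Y ∈ K := by
    intro U Y hY
    simp only [K, Finset.mem_filter, Finset.mem_univ, true_and] at hY ⊢
    rw [map_mul, hY, mul_zero]
  have hent : ∀ Y ∈ K, ∀ i j, ∃ q : ZMod n, Y i j = d * q := by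
    intro Y hY i j
    simp only [K, Finset.mem_filter, Finset.mem_univ, true_and] at hY
    have h1 : ZMod.castHom hdn (ZMod d) (Y i j) = 0 := congrFun (congrFun hY i) j
    obtain ⟨q, hq⟩ := (castHom_zero hdn _).1 h1
    exact ⟨q, by rw [← ZMod.natCast_zmod_val (Y i j), hq]; push_cast; rfl⟩
  have hdd : (d : ZMod n) * d = 0 := by
    rw [← Nat.cast_mul]; exact (ZMod.natCast_eq_zero_iff _ _).2 hd
  have h0 : ∀ Y ∈ K, ∀ Z ∈ K, Y * Z = 0 := by
    intro Y hY Z hZ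
    ext i j
    rw [Matrix.mul_apply]
    apply Finset.sum_eq_zero
    intro k _
    obtain ⟨q, hq⟩ := hent Y hY i k
    obtain ⟨r, hr⟩ := hent Z hZ k j
    rw [hq, hr]
    linear_combination (q * r) * hdd
  choose g hg using red_surj d n hdn
  refine ⟨∑ b, g b ^ m, ?_⟩
  rw [← Finset.sum_fiberwise (s := Finset.univ) (g := φ), Finset.smul_sum]
  refine Finset.sum_congr rfl fun b _ => ?_
  have hc : K.card = e ^ 4 := red_ker_card d e n h
  rw [← hc, ← coset_sum K hl h0]
  have hgb : φ (g b) = b := hg b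
  refine Finset.sum_bij' (fun M _ => M - g b) (fun Y _ => g b + Y) ?_ ?_ ?_ ?_ ?_
  · intro M hM
    simp only [K, Finset.mem_filter, Finset.mem_univ, true_and] at hM ⊢
    rw [map_sub, hM, hgb, sub_self]
  · intro M hM
    simp only [K, Finset.mem_filter, Finset.mem_univ, true_and] at hM ⊢
    rw [map_add, hM, hgb, add_zero]
  · intro M _; simp
  · intro M _; simp
  · intro M _; simp

lemma red_sum (d e n m : ℕ) [NeZero n] [NeZero d] (h : n = d * e) :
    red d n ⟨e, h⟩ (∑ M : Mt (ZMod n), M ^ m) = (e ^ 4) • ∑ M : Mt (ZMod d), M ^ m := by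
  rw [map_sum, ← Finset.sum_fiberwise (s := Finset.univ) (g := red d n ⟨e, h⟩), Finset.smul_sum]
  refine Finset.sum_congr rfl fun b _ => ?_
  have hc : (Finset.univ.filter fun a => red d n ⟨e, h⟩ a = b).card = e ^ 4 := by
    rw [← red_ker_card d e n h]
    exact fiber_card (red d n ⟨e, h⟩).toAddMonoidHom (red_surj d n ⟨e, h⟩) b
  rw [← hc, ← Finset.sum_const]
  refine Finset.sum_congr rfl fun M hM => ?_
  rw [map_pow, (Finset.mem_filter.1 hM).2]

lemma pow_form (R : Type*) [CommRing R] (n : ℕ) : ∃ α β : R → R → R, ∀ M : Mt R,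
    M ^ n = α M.trace M.det • M + β M.trace M.det • (1 : Mt R) := by
  induction n with
  | zero => exact ⟨fun _ _ => 0, fun _ _ => 1, fun M => by simp⟩
  | succ n ih =>
    obtain ⟨α, β, h⟩ := ih
    refine ⟨fun t d => α t d * t + β t d, fun t d => - (α t d * d), fun M => ?_⟩
    have h2 : M * M = M.trace • M - M.det • (1 : Mt R) := by
      ext i j
      fin_cases i <;> fin_cases j <;>
        simp [Matrix.mul_apply, Fin.sum_univ_two, Matrix.trace_fin_two, Matrix.det_fin_two] <;> ring
    rw [pow_succ, h, add_mul, smul_mul_assoc, h2, smul_mul_assoc, one_mul]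
    module

def ent (R : Type*) [CommRing R] : (R × R × R × R) ≃ Mt R where
  toFun x := !![x.2.1, x.2.2.1; x.2.2.2, x.1 - x.2.1]
  invFun M := (M.trace, M 0 0, M 0 1, M 1 0)
  left_inv x := by simp [Matrix.trace_fin_two]
  right_inv M := by
    ext i j; fin_cases i <;> fin_cases j <;> simp [Matrix.trace_fin_two]

lemma sum_beta (p : ℕ) [Fact p.Prime] (β : ZMod p → ZMod p → ZMod p) :
    ∑ M : Mt (ZMod p), β M.trace M.det = 0 := by
  rw [← (ent (ZMod p)).sum_comp]
  simp only [Fintype.sum_prod_type]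
  refine Finset.sum_eq_zero fun t _ => ?_
  have key : ∀ a b : ZMod p, ∑ c : ZMod p, β (ent (ZMod p) (t, a, b, c)).trace
      (ent (ZMod p) (t, a, b, c)).det = if b = 0 then 0 else ∑ x, β t x := by
    intro a b
    simp only [ent, Equiv.coe_fn_mk, Matrix.trace_fin_two_of, Matrix.det_fin_two_of,
      add_sub_cancel]
    split_ifs with hb
    · subst hb
      simp
    · refine Fintype.sum_bijective (fun c => a * (t - a) - b * c) ?_ _ _ (fun _ => rfl)
      apply Finite.injective_iff_bijective.1
      intro x y hxy
      simpa [hb] using hxy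
  simp only [key]
  simp

lemma sum_odd (p : ℕ) [Fact p.Prime] (hp : p ≠ 2) (n : ℕ) :
    ∑ M : Mt (ZMod p), M ^ n = 0 := by
  obtain ⟨α, β, h⟩ := pow_form (ZMod p) n
  simp only [h, Finset.sum_add_distrib]
  rw [← Finset.sum_smul, sum_beta, zero_smul, add_zero]
  set T := ∑ M : Mt (ZMod p), α M.trace M.det • M with hT
  have hadj : ∀ M : Mt (ZMod p), M.adjugate = M.trace • (1 : Mt (ZMod p)) - M := by
    intro M
    ext i j
    fin_cases i <;> fin_cases j <;> simp [Matrix.adjugate_fin_two, Matrix.trace_fin_two]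
  have hbij : Function.Involutive (fun M : Mt (ZMod p) => M.adjugate) := by
    intro M
    ext i j
    fin_cases i <;> fin_cases j <;> simp [Matrix.adjugate_fin_two]
  have h1 : T = ∑ M : Mt (ZMod p), α M.trace M.det • M.adjugate := by
    rw [hT, ← hbij.bijective.sum_comp]
    refine Finset.sum_congr rfl fun M _ => ?_
    congr 2
    · simp [Matrix.adjugate_fin_two, Matrix.trace_fin_two, add_comm]
    · simp [Matrix.adjugate_fin_two, Matrix.det_fin_two, mul_comm]
  have h2 : T = -T := by
    conv_lhs => rw [h1]
    simp only [hadj, smul_sub, smul_smul, Finset.sum_sub_distrib, ← Finset.sum_smul]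
    rw [sum_beta p (fun t d => α t d * t), zero_smul, zero_sub]
  have h3 : (2 : ZMod p) ≠ 0 := by
    intro h
    have : ((2 : ℕ) : ZMod p) = 0 := by exact_mod_cast h
    rw [ZMod.natCast_eq_zero_iff] at this
    exact hp ((Nat.prime_dvd_prime_iff_eq Fact.out Nat.prime_two).1 this)
  have h4 : (2 : ZMod p) • T = 0 := by
    rw [two_smul]; nth_rewrite 1 [h2]; simp
  exact (smul_eq_zero.1 h4).resolve_left h3

lemma two_step : ∀ M : Mt (ZMod 2), M ^ 8 = M ^ 2 := by decide

lemma two_base : (∑ M : Mt (ZMod 2), M ^ 2 = 0) ∧ (∑ M : Mt (ZMod 2), M ^ 4 = 0) ∧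
    (∑ M : Mt (ZMod 2), M ^ 6 ≠ 0) := by decide

lemma two_red (r k : ℕ) (hr : 2 ≤ r) (M : Mt (ZMod 2)) : M ^ (r + 6 * k) = M ^ r := by
  induction k with
  | zero => rfl
  | succ k ih =>
    obtain ⟨s, rfl⟩ := Nat.exists_eq_add_of_le' hr
    rw [← ih, show s + 2 + 6 * (k+1) = (s + 6 * k) + 8 by ring,
      show s + 2 + 6 * k = (s + 6 * k) + 2 by ring, pow_add, two_step, ← pow_add]

lemma red_zero {d n : ℕ} [NeZero n] (h : d ∣ n) (S : Mt (ZMod n)) :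
    red d n h S = 0 ↔ ∀ i j, d ∣ (S i j).val := by
  simp only [← castHom_zero h]
  constructor
  · intro hS i j
    exact congrFun (congrFun hS i) j
  · intro hS
    ext i j
    exact hS i j

lemma prime_case (n p : ℕ) [NeZero n] (hp : p.Prime) (hpn : p ∣ n) (h : n % 12 ≠ 6) :
    red p n hpn (∑ M : Mt (ZMod n), M ^ n) = 0 := by
  haveI : Fact p.Prime := ⟨hp⟩
  have hn0 := NeZero.ne n
  obtain ⟨e, he⟩ := hpn
  rw [red_sum p e n n he]
  by_cases h2 : p = 2
  · subst h2
    rcases Nat.even_or_odd' e with ⟨f, hf | hf⟩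
    · ext i j
      have : ((e : ℕ) : ZMod 2) = 0 := (ZMod.natCast_eq_zero_iff _ _).2 ⟨f, hf⟩
      simp [this]
    · have : n % 6 = 2 ∨ n % 6 = 4 := by omega
      obtain ⟨b1, b2, -⟩ := two_base
      rcases this with h' | h'
      · rw [show n = 2 + 6 * (n / 6) by omega]
        simp only [two_red 2 _ le_rfl, b1, smul_zero]
      · rw [show n = 4 + 6 * (n / 6) by omega]
        simp only [two_red 4 _ (by norm_num : 2 ≤ 4), b2, smul_zero]
  · rw [sum_odd p h2, smul_zero]

lemma main_zero (n : ℕ) [NeZero n] (h : n % 12 ≠ 6) : ∑ M : Mt (ZMod n), M ^ n = 0 := by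
  have hn0 := NeZero.ne n
  obtain ⟨f, e, hfe, hsq⟩ := Nat.sq_mul_squarefree n
  have he0 : e ≠ 0 := by rintro rfl; simp at hfe; omega
  have hf0 : f ≠ 0 := by rintro rfl; simp at hfe; omega
  haveI : NeZero (e * f) := ⟨mul_ne_zero he0 hf0⟩
  obtain ⟨C, hC⟩ := big_sum (e * f) e n n (by rw [← hfe]; ring) ⟨f, by rw [← hfe]; ring⟩
  set S := ∑ M : Mt (ZMod n), M ^ n with hS
  obtain ⟨k, hk⟩ := Nat.gcd_dvd_left f e
  set g := Nat.gcd f e with hg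
  obtain ⟨e', he'⟩ : g ∣ e := Nat.gcd_dvd_right f e
  have hgk : Nat.Coprime g k := by
    rw [hk] at hsq; exact Nat.coprime_of_squarefree_mul hsq
  have hek : Nat.Coprime e k := by
    apply Nat.Coprime.symm
    rw [Nat.coprime_iff_gcd_eq_one]
    have h1 : Nat.gcd k e ∣ g := Nat.dvd_gcd
      ((Nat.gcd_dvd_left k e).trans ⟨g, by rw [mul_comm]; exact hk⟩) (Nat.gcd_dvd_right k e)
    exact Nat.dvd_one.1 (hgk ▸ Nat.dvd_gcd h1 (Nat.gcd_dvd_left k e))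
  have hksq : Squarefree k := hsq.squarefree_of_dvd ⟨g, by rw [mul_comm]; exact hk⟩
  have hn : n = (e ^ 2 * g) * k := by rw [← hfe, mul_assoc, ← hk]
  have hA : ∀ i j, e ^ 2 * g ∣ (S i j).val := by
    have hd : e ^ 2 * g ∣ n := ⟨k, hn⟩
    rw [← red_zero hd, hC, map_nsmul]
    have : ((e ^ 4 : ℕ) : ZMod (e ^ 2 * g)) = 0 :=
      (ZMod.natCast_eq_zero_iff _ _).2 ⟨e * e', by
        calc e ^ 4 = e ^ 3 * e := by ring
          _ = e ^ 3 * (g * e') := by rw [← he']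
          _ = _ := by ring⟩
    ext i j
    rw [Matrix.smul_apply, nsmul_eq_mul, this, zero_mul]; rfl
  have hB : ∀ i j, k ∣ (S i j).val := by
    intro i j
    rw [← Nat.prod_primeFactors_of_squarefree hksq]
    apply Finset.prod_primes_dvd
    · intro p hp; exact (Nat.prime_of_mem_primeFactors hp).prime
    · intro p hp
      have hpn : p ∣ n := (Nat.dvd_of_mem_primeFactors hp).trans ⟨e ^ 2 * g, by rw [hn]; ring⟩
      exact (red_zero hpn S).1 (prime_case n p (Nat.prime_of_mem_primeFactors hp) hpn h) i j
  ext i j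
  have hcop : Nat.Coprime (e ^ 2 * g) k := Nat.Coprime.mul_left (hek.pow_left 2) hgk
  have := hcop.mul_dvd_of_dvd_of_dvd (hA i j) (hB i j)
  rw [← hn] at this
  rw [← ZMod.natCast_zmod_val (S i j)]
  exact (ZMod.natCast_eq_zero_iff _ _).2 this

lemma main_ne (n : ℕ) [NeZero n] (h : n % 12 = 6) : ∑ M : Mt (ZMod n), M ^ n ≠ 0 := by
  intro hS
  have he : n = 2 * (n / 2) := by omega
  have h1 := red_sum 2 (n / 2) n n he
  rw [hS, map_zero] at h1
  have h3 : ∑ M : Mt (ZMod 2), M ^ n = ∑ M : Mt (ZMod 2), M ^ 6 := by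
    refine Finset.sum_congr rfl fun M _ => ?_
    conv_lhs => rw [show n = 6 + 6 * (n / 6 - 1) by omega]
    exact two_red 6 _ (by norm_num) M
  have h2 : (((n / 2) ^ 4 : ℕ) : ZMod 2) = 1 := by
    have : ((n / 2 : ℕ) : ZMod 2) = 1 := by
      rw [ZMod.natCast_eq_one_iff_odd, Nat.odd_iff]; omega
    rw [Nat.cast_pow, this, one_pow]
  rw [h3] at h1
  apply two_base.2.2
  rw [h1]
  ext i j
  rw [Matrix.smul_apply, nsmul_eq_mul, h2, one_mul]

end Aux

theorem stmt_8 (n : ℕ) (hn : 1 ≤ n) [NeZero n] :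
    (∑ M : Matrix (Fin 2) (Fin 2) (ZMod n), M ^ n) ≠ 0 ↔ n % 12 = 6 := by
  constructor
  · intro h
    by_contra h6
    exact h (Aux.main_zero n h6)
  · exact fun h => Aux.main_ne n h
end
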